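/- There exists a set S of elements of F_q, each of which generates the cyclic group (F_q^∞, ψ) of order q + 1, such that |S| ≥ ⌊φ(q+1)/(2l)⌋ (where φ is Euler's totient function and q = p^l for the prime p), and for any two distinct i, j ∈ S the Cayley digraphs Cay(G, X_i) and Cay(G, X_j) are nonisomorphic; that is, there is no bijection f: G → G such that for all g, h ∈ G, hg⁻¹ ∈ X_i if and only if f(h)f(g)⁻¹ ∈ X_j. -/

import Mathlib

/-- The Heisenberg group `H₃(F)` of upper unitriangular 3×3 matrices over `F`,
recorded by the three free entries: `x` in position (1,2), `y` in position (2,3),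
`z` in position (1,3). -/
@[ext]
structure Heis (F : Type*) where
  x : F
  y : F
  z : F
deriving DecidableEq

namespace Heis

variable {F : Type*} [Field F]

/-- Multiplication corresponding to the matrix product. -/
instance : Group (Heis F) where
  mul a b := ⟨a.x + b.x, a.y + b.y, a.z + b.z + a.x * b.y⟩
  one := ⟨0, 0, 0⟩
  inv a := ⟨-a.x, -a.y, -a.z + a.x * a.y⟩
  mul_assoc a b c := Heis.ext
    (show a.x + b.x + c.x = a.x + (b.x + c.x) by ring)
    (show a.y + b.y + c.y = a.y + (b.y + c.y) by ring)
    (show a.z + b.z + a.x * b.y + c.z + (a.x + b.x) * c.y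
        = a.z + (b.z + c.z + b.x * c.y) + a.x * (b.y + c.y) by ring)
  one_mul a := Heis.ext
    (show (0 : F) + a.x = a.x by ring)
    (show (0 : F) + a.y = a.y by ring)
    (show (0 : F) + a.z + 0 * a.y = a.z by ring)
  mul_one a := Heis.ext
    (show a.x + 0 = a.x by ring)
    (show a.y + 0 = a.y by ring)
    (show a.z + 0 + a.x * 0 = a.z by ring)
  inv_mul_cancel a := Heis.ext
    (show -a.x + a.x = 0 by ring)
    (show -a.y + a.y = 0 by ring)
    (show -a.z + a.x * a.y + a.z + -a.x * a.y = 0 by ring)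

instance [Fintype F] : Fintype (Heis F) :=
  Fintype.ofEquiv (F × F × F)
    ⟨fun p => ⟨p.1, p.2.1, p.2.2⟩, fun a => (a.x, a.y, a.z), fun _ => rfl, fun _ => rfl⟩

end Heis

/-- The element `g(x,y,z)` of the Heisenberg group. -/
def gElt {F : Type*} (x y z : F) : Heis F := ⟨x, y, z⟩

/-- The center `Z = {g(0,0,z) : z ∈ F}` of the Heisenberg group, as a set. -/
def Zset (F : Type*) [Field F] : Set (Heis F) := {g : Heis F | g.x = 0 ∧ g.y = 0}

/-- The center `Z` as a subgroup of the Heisenberg group. -/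
def Zsub (F : Type*) [Field F] : Subgroup (Heis F) where
  carrier := Zset F
  mul_mem' := fun {a b} ha hb =>
    ⟨show a.x + b.x = 0 by rw [ha.1, hb.1, add_zero],
     show a.y + b.y = 0 by rw [ha.2, hb.2, add_zero]⟩
  one_mem' := ⟨rfl, rfl⟩
  inv_mem' := fun {a} ha =>
    ⟨show -a.x = 0 by rw [ha.1, neg_zero],
     show -a.y = 0 by rw [ha.2, neg_zero]⟩

/-- `γ_i(α,β) = αβ/2 + (α² − εβ²)i`. -/
def gam {F : Type*} [Field F] (ε i α β : F) : F := α * β / 2 + (α ^ 2 - ε * β ^ 2) * i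

/-- `Y_i = {g(α, β, γ_i(α,β)) : (α,β) ≠ (0,0)}`. -/
def Yset {F : Type*} [Field F] (ε i : F) : Set (Heis F) :=
  {g : Heis F | ∃ α β : F, (α, β) ≠ (0, 0) ∧ g = gElt α β (gam ε i α β)}

/-- `X_i = Y_i ∪ {e}`. -/
def Xset {F : Type*} [Field F] (ε i : F) : Set (Heis F) := Yset ε i ∪ {1}

/-- The map `ρ(M) : G → G` attached to the matrix `M = [[α,β],[εβ,α]]`. -/
def rho {F : Type*} [Field F] (ε α β : F) : Heis F → Heis F := fun g =>
  gElt (α * g.x + ε * β * g.y) (β * g.x + α * g.y)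
    (α * β * (g.x ^ 2 / 2 + ε * g.y ^ 2 / 2) + ε * β ^ 2 * g.x * g.y
      + (α ^ 2 - ε * β ^ 2) * g.z)

/-- `K = {ρ(M) : M = [[α,β],[εβ,α]], (α,β) ≠ (0,0)}`, as a set of maps `G → G`. -/
def Kset {F : Type*} [Field F] (ε : F) : Set (Heis F → Heis F) :=
  {f | ∃ α β : F, (α, β) ≠ (0, 0) ∧ f = rho ε α β}

/-- The family of sets `{e}`, `Z \ {e}`, `Y_i` for `i ∈ F`. -/
def SFam {F : Type*} [Field F] (ε : F) : Set (Set (Heis F)) :=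
  insert {1} (insert (Zset F \ {1}) {S | ∃ i : F, S = Yset ε i})

/-- `f` preserves each of the basic sets `{e}`, `Z \ {e}`, `Y_i`:
`hg⁻¹ ∈ S ↔ f(h)f(g)⁻¹ ∈ S`. -/
def Preserves {F : Type*} [Field F] (ε : F) (f : Heis F → Heis F) : Prop :=
  ∀ S ∈ SFam ε, ∀ g h : Heis F, h * g⁻¹ ∈ S ↔ f h * (f g)⁻¹ ∈ S

/-- The set of permutations of `G` of the form `x ↦ σ(x)·c` with `σ ∈ K`, `c ∈ G`. -/
def Aset {F : Type*} [Field F] (ε : F) : Set (Equiv.Perm (Heis F)) :=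
  {f | ∃ σ ∈ Kset ε, ∃ c : Heis F, ∀ x : Heis F, f x = σ x * c}

/-- The operation `ψ` on `F ∪ {∞}`, with `∞` encoded as `none`. -/
def psi {F : Type*} [Field F] [DecidableEq F] (ε : F) : Option F → Option F → Option F
  | none, j => j
  | some i, none => some i
  | some i, some j => if i + j = 0 then none else some ((i * j + ε / 16) / (i + j))

/-- `Y_k` for `k ∈ F ∪ {∞}`, where `Y_∞ = Z \ {e}`. -/
def YInf {F : Type*} [Field F] (ε : F) : Option F → Set (Heis F)
  | some i => Yset ε i
  | none => Zset F \ {1}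

/-!
In the coordinates `((x, y), z - γ_i(x, y))` the digraph `Cay(G, X_i)` has an arc from `(v, t)` to
`(w, t + B_i(v, v - w))` for every `w`, where `B_i(v, w) = 2i(αα' - εββ') + (αβ' - βα')/2` for
`v = (α, β)` and `w = (α', β')`. As `ε` is not a square, `B_i` is nondegenerate, so two distinct
vertices have a common out-neighbour exactly when they lie above different points of the plane.
Since the arcs from `(0, t)` lead exactly to the vertices `(w, t)`, an isomorphism
`Cay(G, X_i) → Cay(G, X_j)` fixing the identity is a product map `(φ, S)`, with `S` additive and
`S(B_i(v, w)) = B_j(φ(v), φ(w))`.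

The antisymmetric part of this identity says that `(φ, S)` preserves determinants, and the Plücker
relation between the determinants of four vectors then makes `S / S(1)` a field homomorphism `τ`.
The symmetric part and the Gram determinant of the norm form give `τ(i²ε) = j²ε`. The minimal
polynomial of `i²ε` over the prime field is thus an isomorphism invariant, and it takes each of its
values at most `2l` times. Finally `i ↦ 4i + √ε` identifies `(F ∪ {∞}, ψ)` with the cyclic group
`F(√ε)ˣ / Fˣ`; among its generators, choose one for each value of the invariant.
-/

section FormDigraph

variable {V W A A' : Type*} [AddCommGroup V] [AddCommGroup W] [AddCommGroup A] [AddCommGroup A']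
  {B : V →+ V →+ A} {B' : W →+ W →+ A'}

/-- Adjacency of the digraph attached to a biadditive form `B`: above a vertex `v` of the base there
is the fibre `{v} × A`, and `(v, t)` has exactly one out-neighbour above each `w`. -/
def formAdj (B : V →+ V →+ A) (p q : V × A) : Prop := q.2 = p.2 + B p.1 (p.1 - q.1)

lemma eq_of_formAdj_of_fst_eq {p q r : V × A} (h : p.1 = q.1) (hp : formAdj B p r)
    (hq : formAdj B q r) : p = q := by
  refine Prod.ext h (add_right_cancel (b := B q.1 (q.1 - r.1)) ?_)
  rw [← hq, hp, h]

lemma exists_formAdj_formAdj (hB : ∀ v ≠ 0, Function.Surjective (B v)) {p q : V × A}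
    (h : p.1 ≠ q.1) : ∃ r, formAdj B p r ∧ formAdj B q r := by
  obtain ⟨w, hw⟩ := hB _ (sub_ne_zero.2 h) (p.2 + B p.1 p.1 - (q.2 + B q.1 q.1))
  refine ⟨(w, p.2 + B p.1 (p.1 - w)), rfl, ?_⟩
  rw [map_sub, AddMonoidHom.sub_apply, sub_eq_sub_iff_add_eq_add] at hw
  simp only [formAdj, map_sub, ← add_sub_assoc]
  rw [sub_eq_sub_iff_add_eq_add, ← hw, add_comm]

lemma fst_apply_eq_fst_apply (hB' : ∀ w ≠ 0, Function.Surjective (B' w))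
    (e : formAdj B ≃r formAdj B') {p q : V × A} (h : p.1 = q.1) : (e p).1 = (e q).1 := by
  by_contra hne
  obtain ⟨r, hp, hq⟩ := exists_formAdj_formAdj hB' hne
  rw [← e.apply_symm_apply r, e.map_rel_iff] at hp hq
  exact hne (by rw [eq_of_formAdj_of_fst_eq h hp hq])

lemma snd_apply_eq_snd_apply_zero (hB' : ∀ w ≠ 0, Function.Surjective (B' w))
    (e : formAdj B ≃r formAdj B') (he : e 0 = 0) (v : V) (t : A) :
    (e (v, t)).2 = (e (0, t)).2 := by
  have hfst : (e (0, t)).1 = 0 := by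
    have h := fst_apply_eq_fst_apply hB' e (p := (0, t)) (q := 0) rfl
    rwa [he] at h
  have hadj : formAdj B' (e (0, t)) (e (v, t)) := e.map_rel_iff.2 (by simp [formAdj])
  simpa [formAdj, hfst] using hadj

theorem exists_addMonoidHom_of_formAdj_relIso (hB : ∃ v, Function.Surjective (B v))
    (hB' : ∀ w ≠ 0, Function.Surjective (B' w)) (e : formAdj B ≃r formAdj B') (he : e 0 = 0) :
    ∃ (S : A →+ A') (φ : V → W), Function.Injective S ∧ ∀ v w, S (B v w) = B' (φ v) (φ w) := by
  let φ : V → W := fun v => (e (v, 0)).1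
  let T : A → A' := fun t => (e (0, t)).2
  have hprod (v : V) (t : A) : e (v, t) = (φ v, T t) :=
    Prod.ext (fst_apply_eq_fst_apply hB' e rfl) (snd_apply_eq_snd_apply_zero hB' e he v t)
  have hφ0 : φ 0 = 0 := congrArg Prod.fst he
  have hT0 : T 0 = 0 := congrArg Prod.snd he
  have hadj (v w : V) (t : A) : T (t + B v (v - w)) = T t + B' (φ v) (φ v - φ w) := by
    have h : formAdj B' (e (v, t)) (e (w, t + B v (v - w))) := e.map_rel_iff.2 rfl
    rwa [hprod, hprod] at h
  have hself (v : V) (t : A) : T (t + B v v) = T t + B' (φ v) (φ v) := by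
    simpa [hφ0] using hadj v 0 t
  have hshift (v w : V) (t : A) : T (t + B v w) = T t + B' (φ v) (φ w) := by
    have h := hadj v w (t + B v w)
    rw [map_sub, add_add_sub_cancel, hself, map_sub, ← add_sub_assoc, add_sub_right_comm] at h
    rw [add_right_cancel h, sub_add_cancel]
  have hform (v w : V) : T (B v w) = B' (φ v) (φ w) := by
    simpa [hT0] using hshift v w 0
  refine ⟨AddMonoidHom.mk' T fun s t => ?_, φ, fun s t hst => ?_, hform⟩
  · obtain ⟨v, hv⟩ := hB
    obtain ⟨w, rfl⟩ := hv t
    rw [hshift, hform]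
  · have h : e (0, s) = e (0, t) := by rw [hprod, hprod]; exact congrArg (Prod.mk _) hst
    exact congrArg Prod.snd (e.injective h)

end FormDigraph

section PlaneForms

variable {R : Type*} [CommRing R]

/-- The determinant of two vectors of the plane, the antisymmetric part of `twistedForm`. -/
def detForm (v w : R × R) : R := v.1 * w.2 - v.2 * w.1

/-- The symmetric bilinear form whose quadratic form is the norm form `α² - εβ²` occurring in
`gam`; up to a scalar it is the symmetric part of `twistedForm`. -/
def normForm (ε : R) (v w : R × R) : R := v.1 * w.1 - ε * (v.2 * w.2)

lemma detForm_swap (v w : R × R) : detForm w v = -detForm v w := by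
  simp only [detForm]; ring

lemma normForm_comm (ε : R) (v w : R × R) : normForm ε w v = normForm ε v w := by
  simp only [normForm]; ring

lemma detForm_plucker (a b c d : R × R) :
    detForm a b * detForm c d = detForm a c * detForm b d - detForm a d * detForm b c := by
  simp only [detForm]; ring

lemma normForm_gram (ε : R) (a b : R × R) :
    normForm ε a a * normForm ε b b - normForm ε a b ^ 2 = -(ε * detForm a b ^ 2) := by
  simp only [normForm, detForm]; ring

theorem map_one_mul_map_mul_of_detForm {R' : Type*} [CommRing R'] {S : R →+ R'}
    {φ : R × R → R' × R'} (hdet : ∀ v w, S (detForm v w) = detForm (φ v) (φ w)) (x y : R) :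
    S 1 * S (x * y) = S x * S y := by
  have hx := hdet (x, 0) (1, 0)
  have hy := hdet (0, y) (1, 0)
  have hx' := hdet (x, 0) (0, 1)
  have hxy := hdet (x, 0) (0, y)
  have h1 := hdet (1, 0) (0, 1)
  have hplucker := detForm_plucker (φ (x, 0)) (φ (0, y)) (φ (1, 0)) (φ (0, 1))
  rw [← hx, ← hy, ← hx', ← hxy, ← h1] at hplucker
  simp only [detForm, mul_zero, mul_one, sub_zero, zero_sub, zero_mul, map_zero, map_neg,
    mul_neg, sub_neg_eq_add, zero_add] at hplucker
  rw [mul_comm, hplucker]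

variable {K : Type*} [Field K] {S : R →+ K} {φ : R × R → K × K}

theorem exists_ringHom_of_detForm (hS : S 1 ≠ 0)
    (hdet : ∀ v w, S (detForm v w) = detForm (φ v) (φ w)) :
    ∃ τ : R →+* K, ∀ x, S x = S 1 * τ x := by
  refine ⟨RingHom.mk' ⟨⟨fun x => S x / S 1, div_self hS⟩, fun x y => ?_⟩ fun x y => ?_,
    fun x => (mul_div_cancel₀ (S x) hS).symm⟩
  · change S (x * y) / S 1 = S x / S 1 * (S y / S 1)
    rw [div_mul_div_comm, ← map_one_mul_map_mul_of_detForm hdet, mul_div_mul_left _ _ hS]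
  · exact (congrArg (· / S 1) (map_add S x y)).trans (add_div _ _ _)

theorem exists_ringHom_of_detForm_of_normForm {ε i : R} {ε' j : K} (hS : S 1 ≠ 0)
    (hdet : ∀ v w, S (detForm v w) = detForm (φ v) (φ w))
    (hnorm : ∀ v w, S (i * normForm ε v w) = j * normForm ε' (φ v) (φ w)) :
    ∃ τ : R →+* K, τ (i ^ 2 * ε) = j ^ 2 * ε' := by
  obtain ⟨τ, hτ⟩ := exists_ringHom_of_detForm hS hdet
  refine ⟨τ, mul_left_cancel₀ (pow_ne_zero 2 hS) ?_⟩
  have hgram := normForm_gram ε' (φ (1, 0)) (φ (0, 1))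
  have h₁₁ : S i = j * normForm ε' (φ (1, 0)) (φ (1, 0)) := by
    rw [← hnorm]; simp [normForm]
  have h₂₂ : S (i * ε) = -(j * normForm ε' (φ (0, 1)) (φ (0, 1))) := by
    rw [← hnorm, ← map_neg]; simp [normForm]
  have h₁₂ : j * normForm ε' (φ (1, 0)) (φ (0, 1)) = 0 := by
    rw [← hnorm]; simp [normForm]
  have hone : S 1 = detForm (φ (1, 0)) (φ (0, 1)) := by
    rw [← hdet]; simp [detForm]
  rw [← hone] at hgram
  calc S 1 ^ 2 * τ (i ^ 2 * ε) = S i * S (i * ε) := by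
        rw [hτ i, hτ (i * ε), map_mul, map_mul, map_pow]; ring
    _ = S 1 ^ 2 * (j ^ 2 * ε') := by
        rw [h₁₁, h₂₂]
        linear_combination -j ^ 2 * hgram - j * normForm ε' (φ (1, 0)) (φ (0, 1)) * h₁₂

end PlaneForms

section TwistedForm

variable {F : Type*} [Field F]

/-- The biadditive form `2i(αα' - εββ') + (αβ' - βα')/2`, whose digraph is `Cay(G, X_i)` in the
coordinates of `heisEquiv`. -/
def twistedForm (ε i : F) : F × F →+ F × F →+ F :=
  AddMonoidHom.mk'
    (fun v => AddMonoidHom.mk' (fun w => 2 * i * normForm ε v w + detForm v w / 2) fun w w' => by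
      simp only [normForm, detForm, Prod.fst_add, Prod.snd_add]; ring)
    fun v v' => by
      ext1 w
      simp only [AddMonoidHom.mk'_apply, AddMonoidHom.add_apply, normForm, detForm, Prod.fst_add,
        Prod.snd_add]
      ring

lemma twistedForm_apply (ε i : F) (v w : F × F) :
    twistedForm ε i v w = 2 * i * normForm ε v w + detForm v w / 2 := rfl

lemma twistedForm_sub_swap [NeZero (2 : F)] (ε i : F) (v w : F × F) :
    twistedForm ε i v w - twistedForm ε i w v = detForm v w := by
  rw [twistedForm_apply, twistedForm_apply, normForm_comm ε v w, detForm_swap v w, neg_div,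
    add_sub_add_left_eq_sub, sub_neg_eq_add, add_halves]

lemma twistedForm_add_swap (ε i : F) (v w : F × F) :
    twistedForm ε i v w + twistedForm ε i w v = 4 * i * normForm ε v w := by
  rw [twistedForm_apply, twistedForm_apply, normForm_comm ε v w, detForm_swap v w]
  ring

lemma one_sub_sq_mul_ne_zero {ε : F} (hε : ¬IsSquare ε) (c : F) : 1 - c ^ 2 * ε ≠ 0 := by
  intro h
  refine hε ⟨c⁻¹, ?_⟩
  rw [← mul_inv, ← sq]
  exact eq_inv_of_mul_eq_one_right (sub_eq_zero.1 h).symm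

/-- The witnesses come from the columns of the adjugate of the Gram matrix of `twistedForm ε i`,
whose determinant is `(1 - (4i)²ε) / 4`. -/
lemma twistedForm_surjective [NeZero (2 : F)] {ε : F} (hε : ¬IsSquare ε) (i : F) {v : F × F}
    (hv : v ≠ 0) : Function.Surjective (twistedForm ε i v) := by
  intro k
  have hd := one_sub_sq_mul_ne_zero hε (4 * i)
  have hfst (c : F) :
      twistedForm ε i v (-8 * ε * i * c, 2 * c) = v.1 * (1 - (4 * i) ^ 2 * ε) * c := by
    simp only [twistedForm_apply, normForm, detForm]; field_simp; ring
  have hsnd (c : F) : twistedForm ε i v (-2 * c, 8 * i * c) = v.2 * (1 - (4 * i) ^ 2 * ε) * c := by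
    simp only [twistedForm_apply, normForm, detForm]; field_simp; ring
  by_cases hv1 : v.1 = 0
  · have hv2 : v.2 ≠ 0 := fun h => hv (Prod.ext hv1 h)
    exact ⟨_, (hsnd _).trans (mul_div_cancel₀ k (mul_ne_zero hv2 hd))⟩
  · exact ⟨_, (hfst _).trans (mul_div_cancel₀ k (mul_ne_zero hv1 hd))⟩

end TwistedForm

lemma four_ne_zero_of_two_ne_zero (R : Type*) [Semiring R] [NoZeroDivisors R] [NeZero (2 : R)] :
    (4 : R) ≠ 0 := by
  rw [← two_add_two_eq_four, ← two_mul]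
  exact mul_ne_zero two_ne_zero two_ne_zero

section Cayley

variable {G H : Type*} [Group G] [Group H]

/-- Adjacency of the Cayley digraph `Cay(G, X)`. -/
def cayleyAdj (X : Set G) (g h : G) : Prop := h * g⁻¹ ∈ X

lemma exists_cayleyAdj_relIso_apply_one {X : Set G} {Y : Set H}
    (e : cayleyAdj X ≃r cayleyAdj Y) : ∃ e' : cayleyAdj X ≃r cayleyAdj Y, e' 1 = 1 :=
  ⟨e.trans ⟨Equiv.mulRight (e 1)⁻¹, by simp [cayleyAdj]⟩, mul_inv_cancel (e 1)⟩

variable {F : Type*} [Field F]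

lemma mem_Xset_iff {ε i : F} {g : Heis F} : g ∈ Xset ε i ↔ g.z = gam ε i g.x g.y := by
  constructor
  · rintro (⟨α, β, -, rfl⟩ | rfl)
    · rfl
    · change (0 : F) = gam ε i 0 0
      simp [gam]
  · intro h
    by_cases hv : (g.x, g.y) = (0, 0)
    · obtain ⟨hx, hy⟩ := Prod.mk.inj hv
      exact Or.inr (Heis.ext hx hy (by rw [h, hx, hy]; simp [gam]; rfl))
    · exact Or.inl ⟨g.x, g.y, hv, Heis.ext rfl rfl h⟩

/-- Coordinates on the Heisenberg group in which `X_i` is the plane where the last one vanishes. -/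
def heisEquiv (ε i : F) : Heis F ≃ (F × F) × F where
  toFun g := ((g.x, g.y), g.z - gam ε i g.x g.y)
  invFun p := ⟨p.1.1, p.1.2, p.2 + gam ε i p.1.1 p.1.2⟩
  left_inv g := by simp
  right_inv p := by simp

lemma heisEquiv_one (ε i : F) : heisEquiv ε i 1 = 0 := by
  change ((0, 0), 0 - gam ε i 0 0) = 0
  simp [gam]

/-- `Cay(G, X_i)` is the digraph of `twistedForm ε i`. -/
def cayleyRelIso [NeZero (2 : F)] (ε i : F) :
    cayleyAdj (Xset ε i) ≃r formAdj (twistedForm ε i) where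
  toEquiv := heisEquiv ε i
  map_rel_iff' {g h} := by
    have h2 : (2 : F) ≠ 0 := NeZero.ne 2
    have e : h * g⁻¹ = ⟨h.x + -g.x, h.y + -g.y, h.z + (-g.z + g.x * g.y) + h.x * -g.y⟩ := rfl
    rw [cayleyAdj, mem_Xset_iff, e]
    simp only [formAdj, heisEquiv, twistedForm_apply, normForm, detForm, gam, Equiv.coe_fn_mk,
      Prod.mk_sub_mk]
    field_simp
    constructor <;> intro h <;> linear_combination h

theorem exists_ringHom_of_cayleyAdj_relIso {K L : Type*} [Field K] [Field L] [NeZero (2 : K)]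
    [NeZero (2 : L)] {ε i : K} {ε' j : L} (hε : ¬IsSquare ε) (hε' : ¬IsSquare ε')
    (e : cayleyAdj (Xset ε i) ≃r cayleyAdj (Xset ε' j)) :
    ∃ τ : K →+* L, τ (i ^ 2 * ε) = j ^ 2 * ε' := by
  obtain ⟨e₁, he₁⟩ := exists_cayleyAdj_relIso_apply_one e
  let e₂ := ((cayleyRelIso ε i).symm.trans e₁).trans (cayleyRelIso ε' j)
  have he₂ : e₂ 0 = 0 := by
    change heisEquiv ε' j (e₁ ((heisEquiv ε i).symm 0)) = 0
    rw [← heisEquiv_one ε i, Equiv.symm_apply_apply, he₁, heisEquiv_one]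
  have hv : ((1, 0) : K × K) ≠ 0 := by simp
  obtain ⟨S, φ, hS, hform⟩ := exists_addMonoidHom_of_formAdj_relIso
    ⟨(1, 0), twistedForm_surjective hε i hv⟩ (fun _ => twistedForm_surjective hε' j) e₂ he₂
  have hdet (v w : K × K) : S (detForm v w) = detForm (φ v) (φ w) := by
    rw [← twistedForm_sub_swap ε i, map_sub, hform, hform, twistedForm_sub_swap]
  have hnorm (v w : K × K) :
      S (4 * i * normForm ε v w) = 4 * j * normForm ε' (φ v) (φ w) := by
    rw [← twistedForm_add_swap, map_add, hform, hform, twistedForm_add_swap]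
  have hS1 : S 1 ≠ 0 := (map_ne_zero_iff S hS).2 one_ne_zero
  obtain ⟨τ, hτ⟩ := exists_ringHom_of_detForm_of_normForm hS1 hdet hnorm
  refine ⟨τ, mul_left_cancel₀ (pow_ne_zero 2 (four_ne_zero_of_two_ne_zero L)) ?_⟩
  rwa [mul_pow, mul_assoc, map_mul, map_pow, map_ofNat, mul_pow, mul_assoc] at hτ

end Cayley

section Counting

open Polynomial

lemma minpoly_zmod_map {p : ℕ} {K L : Type*} [Field K] [Field L] [Algebra (ZMod p) K]
    [Algebra (ZMod p) L] (τ : K →+* L) (x : K) :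
    minpoly (ZMod p) (τ x) = minpoly (ZMod p) x := by
  have hcomm : τ.comp (algebraMap (ZMod p) K) = algebraMap (ZMod p) L := RingHom.ext_zmod _ _
  let f : K →ₐ[ZMod p] L := { τ with commutes' := RingHom.congr_fun hcomm }
  exact minpoly.algHom_eq f τ.injective x

variable (k : Type*) {K : Type*} [Field k] [Field K] [Algebra k K] [FiniteDimensional k K]

lemma card_le_finrank_of_minpoly_eq {s : Finset K} {m : k[X]} (hs : ∀ x ∈ s, minpoly k x = m) :
    s.card ≤ Module.finrank k K := by
  classical
  rcases s.eq_empty_or_nonempty with rfl | ⟨x₀, hx₀⟩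
  · simp
  have hm : m ≠ 0 := hs x₀ hx₀ ▸ minpoly.ne_zero (Algebra.IsIntegral.isIntegral x₀)
  have hsub : s ⊆ (m.aroots K).toFinset := fun x hx => by
    rw [Multiset.mem_toFinset, mem_aroots]
    exact ⟨hm, hs x hx ▸ minpoly.aeval k x⟩
  calc s.card ≤ (m.aroots K).toFinset.card := Finset.card_le_card hsub
    _ ≤ (m.aroots K).card := Multiset.toFinset_card_le _
    _ ≤ m.natDegree := m.card_roots_map_le_natDegree
    _ ≤ Module.finrank k K := hs x₀ hx₀ ▸ minpoly.natDegree_le x₀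

lemma card_le_two_mul_finrank_of_minpoly_sq_mul_eq {c : K} (hc : c ≠ 0) {s : Finset K} {m : k[X]}
    (hs : ∀ x ∈ s, minpoly k (x ^ 2 * c) = m) : s.card ≤ 2 * Module.finrank k K := by
  classical
  have hfibre : ∀ y ∈ s.image (· ^ 2 * c), (s.filter (· ^ 2 * c = y)).card ≤ 2 := by
    intro y hy
    obtain ⟨x, -, rfl⟩ := Finset.mem_image.1 hy
    have hsub : s.filter (fun z => z ^ 2 * c = x ^ 2 * c) ⊆ {x, -x} := fun z hz => by
      have hsq : z ^ 2 = x ^ 2 := mul_right_cancel₀ hc (Finset.mem_filter.1 hz).2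
      simpa using sq_eq_sq_iff_eq_or_eq_neg.1 hsq
    exact (Finset.card_le_card hsub).trans Finset.card_le_two
  calc s.card ≤ 2 * (s.image (· ^ 2 * c)).card := Finset.card_le_mul_card_image s 2 hfibre
    _ ≤ 2 * Module.finrank k K :=
      Nat.mul_le_mul_left 2 (card_le_finrank_of_minpoly_eq k (Finset.forall_mem_image.2 hs))

lemma exists_subset_injOn_card_le_mul {α β : Type*} [DecidableEq β] (s : Finset α) (f : α → β)
    (n : ℕ) (hn : ∀ b ∈ s.image f, (s.filter (f · = b)).card ≤ n) :
    ∃ t ⊆ s, Set.InjOn f t ∧ s.card ≤ n * t.card := by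
  have hsurj : Set.SurjOn f s (s.image f) := by
    rw [Finset.coe_image]; exact Set.surjOn_image f s
  obtain ⟨t, hts, hinj, himage⟩ :=
    Finset.exists_subset_injOn_image_eq_of_surjOn (s : Set α) (s.image f) hsurj
  refine ⟨t, hts, hinj, ?_⟩
  rw [← Finset.card_image_of_injOn hinj, himage]
  exact Finset.card_le_mul_card_image s n hn

theorem exists_subset_pairwise_isEmpty_relIso [Fintype K] {p l : ℕ} (hp : p.Prime)
    (hq : Fintype.card K = p ^ l) [NeZero (2 : K)] {ε : K} (hε : ¬IsSquare ε) (A : Finset K) :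
    ∃ S ⊆ A, A.card ≤ 2 * l * S.card ∧ (S : Set K).Pairwise fun i j =>
      IsEmpty (cayleyAdj (Xset ε i) ≃r cayleyAdj (Xset ε j)) := by
  classical
  have := Fact.mk hp
  have : CharP K p := charP_of_card_eq_prime_pow hq
  let _ : Algebra (ZMod p) K := ZMod.algebra K p
  have hfinrank : Module.finrank (ZMod p) K = l := by
    have h := Module.card_eq_pow_finrank (K := ZMod p) (V := K)
    rw [hq, ZMod.card] at h
    exact (Nat.pow_right_injective hp.two_le h).symm
  have hε0 : ε ≠ 0 := fun h => hε (h ▸ IsSquare.zero)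
  obtain ⟨S, hSA, hinj, hcard⟩ := exists_subset_injOn_card_le_mul A
    (fun i => minpoly (ZMod p) (i ^ 2 * ε)) (2 * l) fun m _ => hfinrank ▸
      card_le_two_mul_finrank_of_minpoly_sq_mul_eq (ZMod p) hε0 fun i hi =>
        (Finset.mem_filter.1 hi).2
  refine ⟨S, hSA, hcard, fun i hi j hj hij => ⟨fun e => hij (hinj hi hj ?_)⟩⟩
  obtain ⟨τ, hτ⟩ := exists_ringHom_of_cayleyAdj_relIso hε hε e
  exact (minpoly_zmod_map τ _).symm.trans (congrArg (minpoly (ZMod p)) hτ)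

end Counting

section ProjUnits

/-- The group `Eˣ / Kˣ` of units of a `K`-algebra `E` up to scalars from `K`. -/
abbrev ProjUnits (K E : Type*) [CommRing K] [CommRing E] [Algebra K E] : Type _ :=
  Eˣ ⧸ (Units.map (algebraMap K E).toMonoidHom).range

lemma ProjUnits.mk_eq_mk_iff {K E : Type*} [Field K] [CommRing E] [Nontrivial E] [Algebra K E]
    {u v : Eˣ} : (u : ProjUnits K E) = v ↔ ∃ c : K, c • (u : E) = v := by
  rw [QuotientGroup.eq]
  constructor
  · rintro ⟨c, hc⟩
    refine ⟨c, ?_⟩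
    rw [← mul_inv_cancel_left u v, ← hc, Algebra.smul_def, mul_comm]
    rfl
  · rintro ⟨c, hc⟩
    have hc0 : c ≠ 0 := by
      rintro rfl
      exact v.ne_zero (by rw [← hc, zero_smul])
    refine ⟨Units.mk0 c hc0, ?_⟩
    rw [eq_inv_mul_iff_mul_eq]
    ext1
    rw [← hc, Algebra.smul_def, mul_comm]
    rfl

end ProjUnits

section PsiGroup

open scoped QuadraticAlgebra

variable {F : Type*} [Field F] (ε : F) [Fact (∀ r : F, r ^ 2 ≠ ε + 0 * r)]

/-- The unit `4i + √ε` of `F(√ε)` attached to `i`; the scaling by `4` absorbs the `16` of the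
constant `ε / 16` in `psi`. -/
def psiUnit (i : F) : (QuadraticAlgebra F ε 0)ˣ :=
  Units.mk0 ⟨4 * i, 1⟩ fun h => one_ne_zero (congrArg QuadraticAlgebra.im h)

/-- The isomorphism from `(F ∪ {∞}, ψ)` to `F(√ε)ˣ / Fˣ`, where `F(√ε)` is encoded as
`QuadraticAlgebra F ε 0`. -/
def toProjUnits : Option F → ProjUnits F (QuadraticAlgebra F ε 0)
  | none => 1
  | some i => psiUnit ε i

lemma toProjUnits_psi [NeZero (2 : F)] [DecidableEq F] (a b : Option F) :
    toProjUnits ε (psi ε a b) = toProjUnits ε a * toProjUnits ε b := by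
  have h4 := four_ne_zero_of_two_ne_zero F
  have h16 : (16 : F) ≠ 0 := by
    rw [show (16 : F) = 4 * 4 by norm_num]; exact mul_ne_zero h4 h4
  match a, b with
  | none, b => exact (one_mul _).symm
  | some i, none => exact (mul_one _).symm
  | some i, some j =>
    have hmul : ((psiUnit ε i * psiUnit ε j : (QuadraticAlgebra F ε 0)ˣ) :
        QuadraticAlgebra F ε 0) = ⟨16 * (i * j) + ε, 4 * (i + j)⟩ := by
      ext <;> simp [psiUnit] <;> ring
    rw [psi]
    split_ifs with hij
    · refine ProjUnits.mk_eq_mk_iff.2 ⟨16 * (i * j) + ε, ?_⟩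
      rw [hmul, hij]
      ext <;> simp
    · refine ProjUnits.mk_eq_mk_iff.2 ⟨4 * (i + j), ?_⟩
      rw [hmul]
      ext
      · simp only [psiUnit, Units.val_mk0, QuadraticAlgebra.re_smul, smul_eq_mul]; field_simp; ring
      · simp [psiUnit]

lemma toProjUnits_iterate_psi [NeZero (2 : F)] [DecidableEq F] (a : Option F) (n : ℕ) :
    toProjUnits ε ((psi ε a)^[n] none) = toProjUnits ε a ^ n := by
  induction n with
  | zero => exact (pow_zero _).symm
  | succ n ih => rw [Function.iterate_succ_apply', toProjUnits_psi, ih, pow_succ']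

lemma toProjUnits_some_ne_one (i : F) : toProjUnits ε (some i) ≠ 1 := by
  intro h
  obtain ⟨c, hc⟩ := (ProjUnits.mk_eq_mk_iff (u := 1)).1 h.symm
  simpa [psiUnit] using congrArg QuadraticAlgebra.im hc

lemma toProjUnits_injective [NeZero (2 : F)] : Function.Injective (toProjUnits ε) := by
  rintro (_ | i) (_ | j) h
  · rfl
  · exact absurd h.symm (toProjUnits_some_ne_one ε j)
  · exact absurd h (toProjUnits_some_ne_one ε i)
  · obtain ⟨c, hc⟩ := ProjUnits.mk_eq_mk_iff.1 h
    have him : c = 1 := by simpa [psiUnit] using congrArg QuadraticAlgebra.im hc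
    have hre : 4 * i = 4 * j := by
      simpa [psiUnit, him] using congrArg QuadraticAlgebra.re hc
    rw [mul_left_cancel₀ (four_ne_zero_of_two_ne_zero F) hre]

lemma toProjUnits_surjective [NeZero (2 : F)] : Function.Surjective (toProjUnits ε) := by
  have h4 := four_ne_zero_of_two_ne_zero F
  intro x
  induction x using QuotientGroup.induction_on with | H z =>
  obtain ⟨⟨a, b⟩, hz⟩ : ∃ w, (z : QuadraticAlgebra F ε 0) = w := ⟨_, rfl⟩
  by_cases hb : b = 0
  · refine ⟨none, ProjUnits.mk_eq_mk_iff (u := 1).2 ⟨a, ?_⟩⟩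
    rw [hz]
    ext <;> simp [hb]
  · refine ⟨some (a / (4 * b)), ProjUnits.mk_eq_mk_iff.2 ⟨b, ?_⟩⟩
    rw [hz]
    ext
    · simp only [psiUnit, Units.val_mk0, QuadraticAlgebra.re_smul, smul_eq_mul]; field_simp
    · simp [psiUnit]

variable [NeZero (2 : F)]

lemma toProjUnits_bijective : Function.Bijective (toProjUnits ε) :=
  ⟨toProjUnits_injective ε, toProjUnits_surjective ε⟩

lemma exists_iterate_psi_eq [Finite F] [DecidableEq F] {a : Option F}
    (ha : orderOf (toProjUnits ε a) = Nat.card (Option F)) (x : Option F) :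
    ∃ n : ℕ, (psi ε a)^[n] none = x := by
  have hbij := toProjUnits_bijective ε
  have : Finite (ProjUnits F (QuadraticAlgebra F ε 0)) := Finite.of_surjective _ hbij.2
  have htop : Subgroup.zpowers (toProjUnits ε a) = ⊤ :=
    Subgroup.eq_top_of_card_eq _ (by rw [Nat.card_zpowers, ha, Nat.card_eq_of_bijective _ hbij])
  obtain ⟨n, hn⟩ := mem_powers_iff_mem_zpowers.2 (htop ▸ Subgroup.mem_top (toProjUnits ε x))
  exact ⟨n, hbij.1 ((toProjUnits_iterate_psi ε a n).trans hn)⟩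

lemma card_orderOf_toProjUnits_some [Fintype F] :
    (Finset.univ.filter fun i : F =>
      orderOf (toProjUnits ε (some i)) = Fintype.card F + 1).card =
        Nat.totient (Fintype.card F + 1) := by
  classical
  have hbij := toProjUnits_bijective ε
  have : Finite (QuadraticAlgebra F ε 0) := Module.finite_of_finite F
  have := Fintype.ofFinite (ProjUnits F (QuadraticAlgebra F ε 0))
  have hcard : Fintype.card (ProjUnits F (QuadraticAlgebra F ε 0)) = Fintype.card F + 1 := by
    rw [← Fintype.card_of_bijective hbij, Fintype.card_option]
  rw [← IsCyclic.card_orderOf_eq_totient (α := ProjUnits F (QuadraticAlgebra F ε 0)) hcard.symm.dvd]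
  refine Finset.card_bij (fun i _ => toProjUnits ε (some i)) (by simp)
    (fun i _ j _ h => Option.some_injective F (hbij.1 h)) fun y hy => ?_
  have hy : orderOf y = Fintype.card F + 1 := (Finset.mem_filter.1 hy).2
  obtain ⟨_ | i, rfl⟩ := hbij.2 y
  · have h1 : orderOf (toProjUnits ε none) = 1 := orderOf_one
    exact absurd (Nat.succ.inj (hy.symm.trans h1)) Fintype.card_ne_zero
  · exact ⟨i, by simpa using hy, rfl⟩

theorem exists_card_eq_totient_forall_iterate_psi_eq [Fintype F] [DecidableEq F] :
    ∃ A : Finset F, A.card = Nat.totient (Fintype.card F + 1) ∧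
      ∀ i ∈ A, ∀ x : Option F, ∃ n : ℕ, (psi ε (some i))^[n] none = x :=
  ⟨_, card_orderOf_toProjUnits_some ε, fun i hi => exists_iterate_psi_eq ε <| by
    rw [(Finset.mem_filter.1 hi).2, Nat.card_eq_fintype_card, Fintype.card_option]⟩

end PsiGroup

/-- There exists a set `S` of elements of `F_q`, each of which generates
the cyclic group `(F_q^∞, ψ)` of order `q + 1`, such that `|S| ≥ ⌊φ(q+1)/(2l)⌋` (where
`q = p^l` for the prime `p`), and for any two distinct `i, j ∈ S` the Cayley digraphs
`Cay(G, X_i)` and `Cay(G, X_j)` are nonisomorphic: there is no bijection `f : G → G`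
such that `hg⁻¹ ∈ X_i ↔ f(h)f(g)⁻¹ ∈ X_j` for all `g, h ∈ G`. -/
theorem statement_18 {F : Type*} [Field F] [Fintype F] [DecidableEq F]
    (p l : ℕ) (hp : p.Prime) (hl : 0 < l) (hq : Fintype.card F = p ^ l)
    (hodd : Odd (Fintype.card F)) (ε : F) (hε : ¬IsSquare ε) :
    ∃ S : Finset F,
      (∀ i ∈ S, ∀ x : Option F, ∃ n : ℕ, (psi ε (some i))^[n] none = x) ∧
      Nat.totient (Fintype.card F + 1) / (2 * l) ≤ S.card ∧
      (∀ i ∈ S, ∀ j ∈ S, i ≠ j →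
        ¬∃ f : Heis F → Heis F, Function.Bijective f ∧
          ∀ g h : Heis F, h * g⁻¹ ∈ Xset ε i ↔ f h * (f g)⁻¹ ∈ Xset ε j) := by
  have : NeZero (2 : F) :=
    ⟨Ring.two_ne_zero fun h => hε (FiniteField.isSquare_of_char_two h ε)⟩
  have : Fact (∀ r : F, r ^ 2 ≠ ε + 0 * r) := ⟨fun r h => hε ⟨r, by rw [← sq, h]; simp⟩⟩
  obtain ⟨A, hAcard, hA⟩ := exists_card_eq_totient_forall_iterate_psi_eq ε
  obtain ⟨S, hSA, hcard, hS⟩ := exists_subset_pairwise_isEmpty_relIso hp hq hε A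
  refine ⟨S, fun i hi => hA i (hSA hi), ?_, ?_⟩
  · exact Nat.div_le_of_le_mul (hAcard ▸ hcard)
  · rintro i hi j hj hij ⟨f, hf, hadj⟩
    exact (hS hi hj hij).false ⟨Equiv.ofBijective f hf, (hadj _ _).symm⟩
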